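/- Let 𝒦₁, 𝒦₂ be simplicial complexes over S. If the vertex sets ⋃𝒦₁ and ⋃𝒦₂ are not equal, then d(𝒦₁, 𝒦₂) = 1. -/

import Mathlib

open scoped BigOperators

/-- A simplicial complex over the vertex set `S`: a nonempty collection of
nonempty finite subsets of `S`, closed under taking nonempty subsets. -/
def IsSimplicialComplex {S : Type*} (K : Set (Finset S)) : Prop :=
  K.Nonempty ∧ (∀ F ∈ K, F.Nonempty) ∧
    ∀ F ∈ K, ∀ G : Finset S, G.Nonempty → G ⊆ F → G ∈ K

/-- Halved ℓ¹ distance between finitely supported real functions: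
`d(α,β) = (1/2) ∑ₛ |α s - β s|`. -/
noncomputable def l1dist {S : Type*} (α β : S →₀ ℝ) : ℝ :=
  (1 / 2) * (α - β).sum fun _ x => |x|

/-- The ℓ¹ geometric realization of a collection `K` of finite subsets of `S`:
finitely supported probability vectors whose support is a face of `K`. -/
def realization {S : Type*} (K : Set (Finset S)) : Set (S →₀ ℝ) :=
  {α | (∀ s, 0 ≤ α s) ∧ (α.sum fun _ x => x) = 1 ∧ α.support ∈ K}

/-- Distance from a point to a set of finitely supported functions. -/
noncomputable def distToSet {S : Type*} (α : S →₀ ℝ) (X : Set (S →₀ ℝ)) : ℝ :=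
  sInf (l1dist α '' X)

/-- One-sided Hausdorff distance between (the realizations of) two complexes. -/
noncomputable def hdelta {S : Type*} (K₁ K₂ : Set (Finset S)) : ℝ :=
  sSup ((fun α => distToSet α (realization K₂)) '' realization K₁)

/-- Hausdorff distance between (the realizations of) two simplicial complexes. -/
noncomputable def hdist {S : Type*} (K₁ K₂ : Set (Finset S)) : ℝ :=
  max (hdelta K₁ K₂) (hdelta K₂ K₁)

/-- `d(F, K)`: supremum of distances to `|K|₁` over probability vectors
supported exactly on `F`. -/
noncomputable def dFace {S : Type*} (F : Finset S) (K : Set (Finset S)) : ℝ :=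
  sSup ((fun α => distToSet α (realization K)) ''
    {α : S →₀ ℝ | (∀ s, 0 ≤ α s) ∧ (α.sum fun _ x => x) = 1 ∧ α.support = F})

/-- The `n`-skeleton of a simplicial complex. -/
def skeleton {S : Type*} (n : ℕ) (K : Set (Finset S)) : Set (Finset S) :=
  {F | F ∈ K ∧ F.card ≤ n + 1}

theorem aux_l1dist_eq {S : Type*} [DecidableEq S] (α β : S →₀ ℝ) :
    l1dist α β = (1 / 2) * ∑ s ∈ α.support ∪ β.support, |α s - β s| := by
  unfold l1dist
  rw [Finsupp.sum_of_support_subset (α - β) Finsupp.support_sub _ (by simp)]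
  simp

theorem aux_sum_eq {S : Type*} (α : S →₀ ℝ) (T : Finset S) (hT : α.support ⊆ T)
    (h : (α.sum fun _ x => x) = 1) : ∑ s ∈ T, α s = 1 := by
  rw [← h, Finsupp.sum_of_support_subset α hT _ (by simp)]

theorem aux_le_one {S : Type*} {K L : Set (Finset S)} {α β : S →₀ ℝ}
    (hα : α ∈ realization K) (hβ : β ∈ realization L) : l1dist α β ≤ 1 := by
  classical
  obtain ⟨ha, ha1, -⟩ := hα
  obtain ⟨hb, hb1, -⟩ := hβ
  rw [aux_l1dist_eq]
  have h : ∑ s ∈ α.support ∪ β.support, |α s - β s|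
      ≤ ∑ s ∈ α.support ∪ β.support, (α s + β s) := by
    refine Finset.sum_le_sum fun s _ => ?_
    rw [abs_le]
    constructor <;> linarith [ha s, hb s]
  rw [Finset.sum_add_distrib, aux_sum_eq α _ Finset.subset_union_left ha1,
    aux_sum_eq β _ Finset.subset_union_right hb1] at h
  linarith

theorem aux_nonneg {S : Type*} (α β : S →₀ ℝ) : 0 ≤ l1dist α β := by
  classical
  rw [aux_l1dist_eq]
  have := Finset.sum_nonneg (s := α.support ∪ β.support)
    (f := fun s => |α s - β s|) (fun s _ => abs_nonneg _)
  linarith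

theorem aux_eq_one {S : Type*} {K L : Set (Finset S)} {α β : S →₀ ℝ}
    (hα : α ∈ realization K) (hβ : β ∈ realization L)
    (hd : ∀ s, α s = 0 ∨ β s = 0) : l1dist α β = 1 := by
  classical
  obtain ⟨ha, ha1, -⟩ := hα
  obtain ⟨hb, hb1, -⟩ := hβ
  rw [aux_l1dist_eq]
  have h : ∑ s ∈ α.support ∪ β.support, |α s - β s|
      = ∑ s ∈ α.support ∪ β.support, (α s + β s) := by
    refine Finset.sum_congr rfl fun s _ => ?_
    rcases hd s with h | h
    · simp [h, abs_of_nonneg (hb s)]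
    · simp [h, abs_of_nonneg (ha s)]
  rw [h, Finset.sum_add_distrib, aux_sum_eq α _ Finset.subset_union_left ha1,
    aux_sum_eq β _ Finset.subset_union_right hb1]
  norm_num

theorem aux_single_mem {S : Type*} {K : Set (Finset S)} (h : IsSimplicialComplex K)
    {F : Finset S} (hF : F ∈ K) {v : S} (hv : v ∈ F) :
    Finsupp.single v (1 : ℝ) ∈ realization K := by
  classical
  refine ⟨fun s => ?_, by simp, ?_⟩
  · rw [Finsupp.single_apply]
    split_ifs <;> norm_num
  · rw [Finsupp.support_single_ne_zero v one_ne_zero]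
    exact h.2.2 F hF {v} (by simp) (by simpa using hv)

theorem aux_realization_nonempty {S : Type*} {K : Set (Finset S)}
    (h : IsSimplicialComplex K) : (realization K).Nonempty := by
  obtain ⟨F, hF⟩ := h.1
  obtain ⟨v, hv⟩ := h.2.1 F hF
  exact ⟨_, aux_single_mem h hF hv⟩

theorem aux_dist_le_one {S : Type*} {K L : Set (Finset S)} (hL : IsSimplicialComplex L)
    {α : S →₀ ℝ} (hα : α ∈ realization K) : distToSet α (realization L) ≤ 1 := by
  obtain ⟨β, hβ⟩ := aux_realization_nonempty hL
  refine le_trans (csInf_le ⟨0, ?_⟩ (Set.mem_image_of_mem (l1dist α) hβ)) (aux_le_one hα hβ)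
  rintro _ ⟨γ, -, rfl⟩
  exact aux_nonneg α γ

theorem aux_hdelta_le_one {S : Type*} {K L : Set (Finset S)} (hK : IsSimplicialComplex K)
    (hL : IsSimplicialComplex L) : hdelta K L ≤ 1 := by
  refine csSup_le ((aux_realization_nonempty hK).image _) ?_
  rintro _ ⟨α, hα, rfl⟩
  exact aux_dist_le_one hL hα

theorem aux_one_le_hdelta {S : Type*} {K L : Set (Finset S)} (hK : IsSimplicialComplex K)
    (hL : IsSimplicialComplex L) {F : Finset S} (hF : F ∈ K) {v : S} (hv : v ∈ F)
    (hvL : ∀ G ∈ L, v ∉ G) : 1 ≤ hdelta K L := by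
  classical
  have hm := aux_single_mem hK hF hv
  have h : 1 ≤ distToSet (Finsupp.single v (1 : ℝ)) (realization L) := by
    refine le_csInf ((aux_realization_nonempty hL).image _) ?_
    rintro _ ⟨β, hβ, rfl⟩
    refine (aux_eq_one hm hβ fun s => ?_).ge
    by_cases hs : v = s
    · right
      subst hs
      exact Finsupp.notMem_support_iff.1 (hvL _ hβ.2.2)
    · left
      simp [Finsupp.single_apply, hs]
  refine h.trans (le_csSup ⟨1, ?_⟩ ⟨_, hm, rfl⟩)
  rintro _ ⟨α, hα, rfl⟩
  exact aux_dist_le_one hL hα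

/-- If two simplicial complexes have different vertex sets, then their
Hausdorff distance is `1`. -/
theorem stmt6 {S : Type*} (K₁ K₂ : Set (Finset S))
    (h1 : IsSimplicialComplex K₁) (h2 : IsSimplicialComplex K₂)
    (hvert : (⋃ F ∈ K₁, (F : Set S)) ≠ ⋃ F ∈ K₂, (F : Set S)) :
    hdist K₁ K₂ = 1 := by
  refine le_antisymm (max_le (aux_hdelta_le_one h1 h2) (aux_hdelta_le_one h2 h1)) ?_
  by_contra hlt
  have hlt1 : ¬ 1 ≤ hdelta K₁ K₂ := fun h => hlt (h.trans (le_max_left _ _))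
  have hlt2 : ¬ 1 ≤ hdelta K₂ K₁ := fun h => hlt (h.trans (le_max_right _ _))
  apply hvert
  ext v
  simp only [Set.mem_iUnion, Finset.mem_coe, exists_prop]
  constructor
  · rintro ⟨F, hF, hv⟩
    by_contra hn
    exact hlt1 (aux_one_le_hdelta h1 h2 hF hv fun G hG hvG => hn ⟨G, hG, hvG⟩)
  · rintro ⟨F, hF, hv⟩
    by_contra hn
    exact hlt2 (aux_one_le_hdelta h2 h1 hF hv fun G hG hvG => hn ⟨G, hG, hvG⟩)
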